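/- Let k be a positive integer, let σ > 0, and let K, L ≥ 0. Let γ_σ denote the centred Gaussian measure on ℝ with variance σ². Let a < b. Then there exists a constant C > 0, depending only on a, b, k, K, L and σ, with the following property: for every real number N ≥ 1 and every Borel probability measure μ on ℝ whose characteristic function φ_μ(τ) := ∫ e^{iτx} dμ(x) satisfies |φ_μ(τ) − e^{−σ²τ²/2}| ≤ K Σ_{j=1}^{2k−1} N^{−j/2} (1 + τ² L²)^{(j+1)/2} for all τ ∈ ℝ, one has | μ([a,b]) − γ_σ([a,b]) | ≤ C N^{−1/12}. -/

import Mathlib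

/-!
The characteristic function hypothesis is first reduced to its leading term. With
`u = 1 + τ²L²`, the `j`-th summand is at most `N^{-1/2} u` as long as `u ≤ N`, and for `u > N` the
trivial bound `|φ_μ - φ_γ| ≤ 2 ≤ 2 N^{-1/2} u` holds. Hence, in all cases,
`|φ_μ(τ) - φ_γ(τ)| ≤ D (1 + τ²)` with `D = O(N^{-1/2})` (`norm_charFun_sub_le`).

The interval probabilities are then compared by smoothing. For a fixed smooth probability density
`η` supported in `[-1, 1]`, with rescaling `η_ε = ε⁻¹ η(· / ε)`, Fourier inversion gives a uniform
bound `O(D ε⁻³)` on the difference of the densities of `μ ∗ η_ε` and `γ ∗ η_ε`. Since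
`μ([c, d]) ≤ (μ ∗ η_ε)([c - ε, d + ε]) ≤ μ([c - 2ε, d + 2ε])`, this implies
`μ([c, d]) ≤ γ([c - 2ε, d + 2ε]) + O(D ε⁻³)` and the same with `μ` and `γ` exchanged
(`measure_Icc_le`). The Gaussian has bounded density, so enlarging or shrinking the interval by `2ε`
costs `O(ε)`. The choice `ε = N^{-1/12}` makes `D ε⁻³ = O(N^{-1/4})`, and the error `O(ε)` is the
dominant one.
-/

/- Abstract central limit theorem: from a quantitative bound on the characteristic function to
a Berry–Esseen type bound on interval probabilities. -/

open MeasureTheory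
open scoped ENNReal Real

noncomputable section

/-- The centred Gaussian measure on `ℝ` with variance `σ²`, given by the density
`(2πσ²)^{−1/2} e^{−x²/(2σ²)}` with respect to Lebesgue measure. -/
def gaussMeasure (σ : ℝ) : Measure ℝ :=
  volume.withDensity fun x =>
    ENNReal.ofReal ((Real.sqrt (2 * Real.pi * σ ^ 2))⁻¹ * Real.exp (-x ^ 2 / (2 * σ ^ 2)))

/-- A smoothing kernel `η` together with a function `h` of which it is the inverse Fourier
transform; the second moment of `|h|` is what pairs with a quadratic bound on the difference of two
characteristic functions. -/
lemma exists_smoothing_kernel : ∃ (η : ℝ → ℝ) (h : ℝ → ℂ), Continuous η ∧ (∀ x, 0 ≤ η x) ∧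
    (∀ x, 1 ≤ |x| → η x = 0) ∧ (∫ x, η x = 1) ∧ Integrable η ∧ Integrable h ∧
    Integrable (fun ξ => ξ ^ 2 * ‖h ξ‖) ∧
    ∀ x : ℝ, (η x : ℂ) = ∫ ξ : ℝ, Complex.exp ((2 * π * ξ * x : ℝ) * Complex.I) * h ξ := by
  let f : ContDiffBump (0 : ℝ) := ⟨1 / 2, 1, by norm_num, by norm_num⟩
  let η : ℝ → ℝ := f.normed volume
  have hsupp : ∀ x, 1 ≤ |x| → η x = 0 := by
    intro x hx
    have : x ∉ Function.support η := by
      rw [f.support_normed_eq]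
      simpa [f] using hx
    simpa using this
  have h1 : HasCompactSupport (fun x => (η x : ℂ)) :=
    f.hasCompactSupport_normed.comp_left (g := fun x : ℝ => (x : ℂ)) (by simp)
  have h2 : ContDiff ℝ (⊤ : ℕ∞) (fun x => (η x : ℂ)) :=
    Complex.ofRealCLM.contDiff.comp f.contDiff_normed
  let g : SchwartzMap ℝ ℂ := h1.toSchwartzMap h2
  refine ⟨η, FourierTransform.fourier g, f.continuous_normed, f.nonneg_normed, hsupp,
    f.integral_normed, f.integrable_normed, SchwartzMap.integrable _, ?_, ?_⟩
  · simpa using (FourierTransform.fourier g).integrable_pow_mul volume 2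
  · intro x
    have h3 : FourierTransformInv.fourierInv (FourierTransform.fourier g) x = (η x : ℂ) := by
      rw [FourierTransform.fourierInv_fourier_eq]
      rfl
    rw [← h3, SchwartzMap.fourierInv_coe, Real.fourierInv_eq']
    refine integral_congr_ae (Filter.Eventually.of_forall fun ξ => ?_)
    simp [smul_eq_mul]
    left
    ring_nf

/-- Fourier inversion for the kernel turns the smoothed density of `μ` at `y` (up to the factor `ε⁻¹`) into an integral
against the characteristic function of `μ`. -/
lemma smoothed_eq (η : ℝ → ℝ) (h : ℝ → ℂ) (hh : Integrable h)
    (hinv : ∀ x : ℝ, (η x : ℂ) = ∫ ξ : ℝ, Complex.exp ((2 * π * ξ * x : ℝ) * Complex.I) * h ξ)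
    (μ : Measure ℝ) [IsProbabilityMeasure μ] (ε y : ℝ) :
    ((∫ x, η ((y - x) / ε) ∂μ : ℝ) : ℂ) =
      ∫ ξ : ℝ, Complex.exp ((2 * π * ξ * (y / ε) : ℝ) * Complex.I) * h ξ *
        charFun μ (-(2 * π * ξ / ε)) := by
  rw [← integral_complex_ofReal]
  simp_rw [hinv]
  rw [integral_integral_swap]
  · refine integral_congr_ae (Filter.Eventually.of_forall fun ξ => ?_)
    simp only [charFun_apply_real]
    rw [← integral_const_mul]
    refine integral_congr_ae (Filter.Eventually.of_forall fun x => ?_)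
    simp only
    rw [mul_right_comm (Complex.exp _), ← Complex.exp_add]
    congr 2
    push_cast
    ring
  · have h1 : Integrable (fun p : ℝ × ℝ => h p.2) (μ.prod volume) := hh.comp_snd μ
    refine (h1.bdd_mul (c := 1)
      (f := fun p : ℝ × ℝ => Complex.exp ((2 * π * p.2 * ((y - p.1) / ε) : ℝ) * Complex.I))
      ?_ ?_)
    · exact (by fun_prop : Measurable _).aestronglyMeasurable
    · exact Filter.Eventually.of_forall fun p => (Complex.norm_exp_ofReal_mul_I _).le

lemma abs_smoothed_sub_le (η : ℝ → ℝ) (h : ℝ → ℂ) (hh : Integrable h)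
    (hh2 : Integrable (fun ξ => ξ ^ 2 * ‖h ξ‖))
    (hinv : ∀ x : ℝ, (η x : ℂ) = ∫ ξ : ℝ, Complex.exp ((2 * π * ξ * x : ℝ) * Complex.I) * h ξ)
    (μ ν : Measure ℝ) [IsProbabilityMeasure μ] [IsProbabilityMeasure ν]
    (D : ℝ) (hD : 0 ≤ D) (hφ : ∀ t, ‖charFun μ t - charFun ν t‖ ≤ D * (1 + t ^ 2))
    (ε : ℝ) (hε : 0 < ε) (hε1 : ε ≤ 1) (y : ℝ) :
    |(∫ x, η ((y - x) / ε) ∂μ) - ∫ x, η ((y - x) / ε) ∂ν| ≤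
      D * (ε⁻¹) ^ 2 * ∫ ξ, (‖h ξ‖ + 4 * π ^ 2 * (ξ ^ 2 * ‖h ξ‖)) := by
  have hint : ∀ (ρ : Measure ℝ) [IsProbabilityMeasure ρ], Integrable (fun ξ : ℝ =>
      Complex.exp ((2 * π * ξ * (y / ε) : ℝ) * Complex.I) * h ξ *
        charFun ρ (-(2 * π * ξ / ε))) := by
    intro ρ _
    refine Integrable.mul_bdd (c := 1) (hh.bdd_mul (c := 1) ?_ ?_) ?_ ?_
    · exact (by fun_prop : Measurable _).aestronglyMeasurable
    · exact Filter.Eventually.of_forall fun p => (Complex.norm_exp_ofReal_mul_I _).le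
    · exact (measurable_charFun.comp (by fun_prop)).aestronglyMeasurable
    · exact Filter.Eventually.of_forall fun p => norm_charFun_le_one _
  rw [← Real.norm_eq_abs, ← Complex.norm_real, Complex.ofReal_sub]
  rw [smoothed_eq η h hh hinv μ, smoothed_eq η h hh hinv ν, ← integral_sub (hint μ) (hint ν),
    ← integral_const_mul]
  refine norm_integral_le_of_norm_le ((hh.norm.add (hh2.const_mul _)).const_mul _)
    (Filter.Eventually.of_forall fun ξ => ?_)
  rw [← mul_sub, norm_mul, norm_mul, Complex.norm_exp_ofReal_mul_I, one_mul]
  have hε2 : 1 ≤ ε⁻¹ ^ 2 := one_le_pow₀ ((one_le_inv₀ hε).2 hε1)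
  calc _ ≤ ‖h ξ‖ * (D * (1 + (-(2 * π * ξ / ε)) ^ 2)) := by gcongr; exact hφ _
    _ = D * ‖h ξ‖ * (1 + ε⁻¹ ^ 2 * (4 * π ^ 2 * ξ ^ 2)) := by field_simp; ring
    _ ≤ D * ‖h ξ‖ * (ε⁻¹ ^ 2 + ε⁻¹ ^ 2 * (4 * π ^ 2 * ξ ^ 2)) := by gcongr
    _ = _ := by simp; ring

/-- Smoothing comparison: a quadratic bound on the difference of the characteristic functions
controls interval probabilities up to an enlargement of the interval by `2ε` on each side. The
interval `[c, d]` may be empty; only the upper bound `B` on the length enters. -/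
lemma measure_Icc_le : ∃ A : ℝ, 0 ≤ A ∧ ∀ (μ ν : Measure ℝ) [IsProbabilityMeasure μ]
    [IsProbabilityMeasure ν] (D : ℝ), 0 ≤ D →
    (∀ t, ‖charFun μ t - charFun ν t‖ ≤ D * (1 + t ^ 2)) →
    ∀ (ε : ℝ), 0 < ε → ε ≤ 1 → ∀ (c d B : ℝ), 0 ≤ B → d - c + 2 * ε ≤ B →
    μ.real (Set.Icc c d) ≤ ν.real (Set.Icc (c - 2 * ε) (d + 2 * ε)) + A * D * ε⁻¹ ^ 3 * B := by
  obtain ⟨η, h, hc, h0, hs, h1, hi, hh, hh2, hinv⟩ := exists_smoothing_kernel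
  refine ⟨∫ ξ, (‖h ξ‖ + 4 * π ^ 2 * (ξ ^ 2 * ‖h ξ‖)), integral_nonneg fun ξ => by positivity, ?_⟩
  intro μ ν _ _ D hD hφ ε hε hε1 c d B hB hcdB
  set A := ∫ ξ, (‖h ξ‖ + 4 * π ^ 2 * (ξ ^ 2 * ‖h ξ‖))
  have hA : 0 ≤ A := integral_nonneg fun ξ => by positivity
  -- `I` is the domain of integration, `F` the convolution of its indicator with the kernel.
  set I := Set.Icc (c - ε) (d + ε) with hI
  let F : ℝ → ℝ := fun x => ∫ y in I, ε⁻¹ * η ((y - x) / ε)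
  obtain ⟨M, hM⟩ : ∃ M, ∀ x, ‖η x‖ ≤ M := by
    have hcs : HasCompactSupport η := by
      refine HasCompactSupport.intro (isCompact_Icc (a := (-1 : ℝ)) (b := 1)) fun x hx => hs x ?_
      by_contra hlt
      exact hx (abs_le.1 (not_le.1 hlt).le)
    exact hcs.exists_bound_of_continuous hc
  have hfull : ∀ x, ∫ y, ε⁻¹ * η ((y - x) / ε) = 1 := by
    intro x
    rw [integral_const_mul, integral_sub_right_eq_self (fun y => η (y / ε)) x,
      Measure.integral_comp_div, h1, abs_of_pos hε, smul_eq_mul, mul_one, inv_mul_cancel₀ hε.ne']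
  have hfi : ∀ x, Integrable (fun y => ε⁻¹ * η ((y - x) / ε)) := fun x =>
    ((hi.comp_div hε.ne').comp_sub_right x).const_mul _
  have hprod : ∀ (ρ : Measure ℝ) [IsProbabilityMeasure ρ], Integrable
      (Function.uncurry fun x y => ε⁻¹ * η ((y - x) / ε)) (ρ.prod (volume.restrict I)) := by
    intro ρ _
    have : IsFiniteMeasure (volume.restrict I) := ⟨by simp [hI]⟩
    refine Integrable.of_bound
      (by unfold Function.uncurry; fun_prop : Continuous _).aestronglyMeasurable (ε⁻¹ * M)
      (Filter.Eventually.of_forall fun p => ?_)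
    simp only [Function.uncurry, norm_mul, norm_inv, Real.norm_of_nonneg hε.le]
    gcongr
    exact hM _
  have hFi : ∀ (ρ : Measure ℝ) [IsProbabilityMeasure ρ], Integrable F ρ :=
    fun ρ _ => (hprod ρ).integral_prod_left
  have hF0 : ∀ x, 0 ≤ F x := fun x =>
    integral_nonneg fun y => mul_nonneg (inv_nonneg.2 hε.le) (h0 _)
  have hF1 : ∀ x, F x ≤ 1 := fun x => (hfull x) ▸
    setIntegral_le_integral (hfi x)
      (Filter.Eventually.of_forall fun y => mul_nonneg (inv_nonneg.2 hε.le) (h0 _))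
  have hfar : ∀ x y, ε ≤ |y - x| → ε⁻¹ * η ((y - x) / ε) = 0 := by
    intro x y hxy
    rw [hs _ (by rwa [abs_div, abs_of_pos hε, one_le_div hε]), mul_zero]
  have hFone : ∀ x ∈ Set.Icc c d, F x = 1 := by
    intro x hx
    rw [← hfull x]
    refine setIntegral_eq_integral_of_forall_compl_eq_zero fun y hy => hfar x y ?_
    by_contra hlt
    have := abs_lt.1 (not_le.1 hlt)
    exact hy ⟨by linarith [hx.1], by linarith [hx.2]⟩
  have hFzero : ∀ x, x ∉ Set.Icc (c - 2 * ε) (d + 2 * ε) → F x = 0 := by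
    intro x hx
    refine setIntegral_eq_zero_of_forall_eq_zero fun y hy => hfar x y ?_
    by_contra hlt
    have := abs_lt.1 (not_le.1 hlt)
    exact hx ⟨by linarith [hy.1], by linarith [hy.2]⟩
  have hswap : ∀ (ρ : Measure ℝ) [IsProbabilityMeasure ρ],
      ∫ x, F x ∂ρ = ∫ y in I, ε⁻¹ * ∫ x, η ((y - x) / ε) ∂ρ := by
    intro ρ _
    simp only [F]
    rw [integral_integral_swap (hprod ρ)]
    simp_rw [integral_const_mul]
  have hGi : ∀ (ρ : Measure ℝ) [IsProbabilityMeasure ρ],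
      Integrable (fun y => ε⁻¹ * ∫ x, η ((y - x) / ε) ∂ρ) (volume.restrict I) := by
    intro ρ _
    have := (hprod ρ).integral_prod_right
    simpa only [Function.uncurry, integral_const_mul] using this
  have hdiff : ∫ x, F x ∂μ - ∫ x, F x ∂ν ≤ A * D * ε⁻¹ ^ 3 * B := by
    rw [hswap μ, hswap ν, ← integral_sub (hGi μ) (hGi ν)]
    have hb := norm_setIntegral_le_of_norm_le_const (μ := volume) (s := I)
      (C := A * D * ε⁻¹ ^ 3) (f := fun y => ε⁻¹ * (∫ x, η ((y - x) / ε) ∂μ) -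
        ε⁻¹ * ∫ x, η ((y - x) / ε) ∂ν) (by simp [hI]) (fun y _ => by
        rw [← mul_sub, norm_mul, norm_inv, Real.norm_of_nonneg hε.le, Real.norm_eq_abs]
        calc _ ≤ ε⁻¹ * (D * (ε⁻¹) ^ 2 * A) := by
              gcongr
              exact abs_smoothed_sub_le η h hh hh2 hinv μ ν D hD hφ ε hε hε1 y
          _ = _ := by ring)
    refine (le_abs_self _).trans (hb.trans ?_)
    gcongr
    rw [hI, Real.volume_real_Icc]
    exact max_le (by linarith) hB
  have hμ : μ.real (Set.Icc c d) ≤ ∫ x, F x ∂μ := by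
    rw [← integral_indicator_one measurableSet_Icc]
    refine integral_mono ((integrable_const 1).indicator measurableSet_Icc) (hFi μ) fun x => ?_
    by_cases hx : x ∈ Set.Icc c d
    · simp [hx, hFone x hx]
    · simp [hx, hF0 x]
  have hν : ∫ x, F x ∂ν ≤ ν.real (Set.Icc (c - 2 * ε) (d + 2 * ε)) := by
    rw [← integral_indicator_one measurableSet_Icc]
    refine integral_mono (hFi ν) ((integrable_const 1).indicator measurableSet_Icc) fun x => ?_
    by_cases hx : x ∈ Set.Icc (c - 2 * ε) (d + 2 * ε)
    · rw [Set.indicator_of_mem hx]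
      exact hF1 x
    · rw [Set.indicator_of_notMem hx, hFzero x hx]
  linarith

lemma gaussMeasure_eq (σ : ℝ) (hσ : 0 < σ) :
    gaussMeasure σ = ProbabilityTheory.gaussianReal 0 (σ ^ 2).toNNReal := by
  rw [ProbabilityTheory.gaussianReal_of_var_ne_zero]
  · unfold gaussMeasure ProbabilityTheory.gaussianPDF ProbabilityTheory.gaussianPDFReal
    simp only [sub_zero, Real.coe_toNNReal _ (sq_nonneg σ)]
  · exact (Real.toNNReal_pos.2 (by positivity)).ne'

lemma gaussMeasure_Icc_le (σ : ℝ) (c d : ℝ) :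
    gaussMeasure σ (Set.Icc c d) ≤
      ENNReal.ofReal ((Real.sqrt (2 * π * σ ^ 2))⁻¹ * max (d - c) 0) := by
  rw [gaussMeasure, withDensity_apply _ measurableSet_Icc]
  have hM : 0 ≤ (Real.sqrt (2 * π * σ ^ 2))⁻¹ := by positivity
  calc _ ≤ ∫⁻ _ in Set.Icc c d, ENNReal.ofReal ((Real.sqrt (2 * π * σ ^ 2))⁻¹) := by
        refine lintegral_mono fun x => ENNReal.ofReal_le_ofReal ?_
        refine mul_le_of_le_one_right hM (Real.exp_le_one_iff.2 ?_)
        rw [neg_div]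
        exact neg_nonpos.2 (by positivity)
    _ = _ := by
        rw [setLIntegral_const, Real.volume_Icc, ENNReal.ofReal_mul hM, ENNReal.ofReal_max]
        simp

/-- Enlarging an interval by `δ` on each side raises its Gaussian mass by at most `2δ` times the
maximal density. Negative-length intervals are allowed, which is used for the shrunk interval. -/
lemma gaussMeasure_enlarge (σ : ℝ) (hσ : 0 < σ) (c d δ : ℝ) (hδ : 0 ≤ δ) :
    (gaussMeasure σ).real (Set.Icc (c - δ) (d + δ)) ≤
      (gaussMeasure σ).real (Set.Icc c d) + 2 * (Real.sqrt (2 * π * σ ^ 2))⁻¹ * δ := by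
  have : IsProbabilityMeasure (gaussMeasure σ) := by rw [gaussMeasure_eq σ hσ]; infer_instance
  have hsub : Set.Icc (c - δ) (d + δ) ⊆
      Set.Icc c d ∪ (Set.Icc (c - δ) c ∪ Set.Icc d (d + δ)) := by
    intro x hx
    by_cases h1 : x ≤ c
    · exact Or.inr (Or.inl ⟨hx.1, h1⟩)
    by_cases h2 : d ≤ x
    · exact Or.inr (Or.inr ⟨h2, hx.2⟩)
    · exact Or.inl ⟨(not_le.1 h1).le, (not_le.1 h2).le⟩
  have hlen : ∀ p q : ℝ, q - p = δ →
      (gaussMeasure σ).real (Set.Icc p q) ≤ (Real.sqrt (2 * π * σ ^ 2))⁻¹ * δ := by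
    intro p q hpq
    have := gaussMeasure_Icc_le σ p q
    rw [hpq, max_eq_left hδ] at this
    exact ENNReal.toReal_le_of_le_ofReal (by positivity) this
  have h1 := hlen (c - δ) c (by ring)
  have h2 := hlen d (d + δ) (by ring)
  have h3 := measureReal_mono (μ := gaussMeasure σ) hsub
  have h4 := measureReal_union_le (μ := gaussMeasure σ) (Set.Icc c d)
    (Set.Icc (c - δ) c ∪ Set.Icc d (d + δ))
  have h5 := measureReal_union_le (μ := gaussMeasure σ) (Set.Icc (c - δ) c) (Set.Icc d (d + δ))
  linarith

/-- The sum over `j` is dominated by its first term in the range `1 + τ²L² ≤ N`, and beyond that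
range the trivial bound `2` is dominated by twice that term. -/
lemma norm_charFun_sub_le (k : ℕ) (K L : ℝ) (hK : 0 ≤ K) (N : ℝ) (hN : 1 ≤ N)
    (μ ν : Measure ℝ) [IsProbabilityMeasure μ] [IsProbabilityMeasure ν] (τ : ℝ)
    (hφ : ‖charFun μ τ - charFun ν τ‖ ≤ K * ∑ j ∈ Finset.Icc 1 (2 * k - 1),
      N ^ (-(j : ℝ) / 2) * (1 + τ ^ 2 * L ^ 2) ^ (((j : ℝ) + 1) / 2)) :
    ‖charFun μ τ - charFun ν τ‖ ≤
      (2 + K * (2 * k)) * (1 + L ^ 2) * N ^ (-(1 : ℝ) / 2) * (1 + τ ^ 2) := by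
  have hN0 : 0 < N := by linarith
  set u := 1 + τ ^ 2 * L ^ 2 with hu
  have hu1 : 1 ≤ u := by rw [hu]; nlinarith [mul_nonneg (sq_nonneg τ) (sq_nonneg L)]
  have hu0 : 0 < u := by linarith
  have key : ‖charFun μ τ - charFun ν τ‖ ≤ (2 + K * (2 * k)) * (N ^ (-(1 : ℝ) / 2) * u) := by
    have hpos : 0 ≤ N ^ (-(1 : ℝ) / 2) * u := by positivity
    rcases le_total u N with huN | huN
    · have hterm : ∀ j ∈ Finset.Icc 1 (2 * k - 1),
          N ^ (-(j : ℝ) / 2) * u ^ (((j : ℝ) + 1) / 2) ≤ N ^ (-(1 : ℝ) / 2) * u := by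
        intro j hj
        have hj1 : (1 : ℝ) ≤ j := by exact_mod_cast (Finset.mem_Icc.1 hj).1
        have e1 : u ^ (((j : ℝ) + 1) / 2) = u * u ^ (((j : ℝ) - 1) / 2) := by
          rw [← Real.rpow_one_add' hu0.le (by linarith)]
          congr 1; ring
        have e2 : N ^ (-(1 : ℝ) / 2) = N ^ (-(j : ℝ) / 2) * N ^ (((j : ℝ) - 1) / 2) := by
          rw [← Real.rpow_add hN0]
          congr 1; ring
        have e3 : u ^ (((j : ℝ) - 1) / 2) ≤ N ^ (((j : ℝ) - 1) / 2) :=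
          Real.rpow_le_rpow hu0.le huN (by linarith)
        rw [e1, e2]
        calc _ ≤ N ^ (-(j : ℝ) / 2) * (u * N ^ (((j : ℝ) - 1) / 2)) := by gcongr
          _ = _ := by ring
      have hsum := Finset.sum_le_card_nsmul _ _ _ hterm
      rw [Nat.card_Icc, nsmul_eq_mul] at hsum
      have hcard : ((2 * k - 1 + 1 - 1 : ℕ) : ℝ) ≤ 2 * k := by
        have : 2 * k - 1 + 1 - 1 ≤ 2 * k := by omega
        exact_mod_cast this
      calc _ ≤ K * (2 * k * (N ^ (-(1 : ℝ) / 2) * u)) := by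
            refine hφ.trans (mul_le_mul_of_nonneg_left (hsum.trans ?_) hK)
            gcongr
        _ ≤ _ := by nlinarith
    · have h2 : ‖charFun μ τ - charFun ν τ‖ ≤ 2 := by
        have := norm_sub_le (charFun μ τ) (charFun ν τ)
        have h3 : ‖charFun μ τ‖ ≤ 1 := norm_charFun_le_one τ
        have h4 : ‖charFun ν τ‖ ≤ 1 := norm_charFun_le_one τ
        linarith
      have h1 : 1 ≤ N ^ (-(1 : ℝ) / 2) * u := by
        calc (1 : ℝ) ≤ N ^ ((1 : ℝ) / 2) := Real.one_le_rpow hN (by norm_num)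
          _ = N ^ (-(1 : ℝ) / 2) * N := by
            nth_rewrite 3 [← Real.rpow_one N]
            rw [← Real.rpow_add hN0]
            norm_num
          _ ≤ _ := by gcongr
      have : 0 ≤ K * (2 * k) := by positivity
      nlinarith
  refine key.trans ?_
  have hle : u ≤ (1 + L ^ 2) * (1 + τ ^ 2) := by rw [hu]; nlinarith [sq_nonneg τ, sq_nonneg L]
  calc _ ≤ (2 + K * (2 * k)) * (N ^ (-(1 : ℝ) / 2) * ((1 + L ^ 2) * (1 + τ ^ 2))) := by gcongr
    _ = _ := by ring

/-- **Abstract central limit theorem.**  Let `k ≥ 1`, `σ > 0`, `K, L ≥ 0` and `a < b`.  There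
is a constant `C > 0`, depending only on `a, b, k, K, L, σ`, such that for every real `N ≥ 1`
and every Borel probability measure `μ` on `ℝ` whose characteristic function satisfies
`|φ_μ(τ) − e^{−σ²τ²/2}| ≤ K ∑_{j=1}^{2k−1} N^{−j/2} (1 + τ²L²)^{(j+1)/2}` for all `τ`,
one has `|μ([a,b]) − γ_σ([a,b])| ≤ C N^{−1/12}`. -/
theorem abstract_central_limit_theorem
    (k : ℕ) (hk : 0 < k) (σ K L : ℝ) (hσ : 0 < σ) (hK : 0 ≤ K) (hL : 0 ≤ L)
    (a b : ℝ) (hab : a < b) :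
    ∃ C : ℝ, 0 < C ∧
      ∀ (N : ℝ), 1 ≤ N →
      ∀ (μ : Measure ℝ), IsProbabilityMeasure μ →
        (∀ τ : ℝ,
          ‖(∫ x : ℝ, Complex.exp (Complex.I * τ * x) ∂μ) -
              Complex.exp (-((σ : ℂ) ^ 2 * (τ : ℂ) ^ 2) / 2)‖ ≤
            K * ∑ j ∈ Finset.Icc 1 (2 * k - 1),
              N ^ (-(j : ℝ) / 2) * (1 + τ ^ 2 * L ^ 2) ^ (((j : ℝ) + 1) / 2)) →
        |(μ (Set.Icc a b)).toReal - (gaussMeasure σ (Set.Icc a b)).toReal| ≤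
          C * N ^ (-(1 : ℝ) / 12) := by
  have hγ : IsProbabilityMeasure (gaussMeasure σ) := by
    rw [gaussMeasure_eq σ hσ]; infer_instance
  obtain ⟨A, hA, hcomp⟩ := measure_Icc_le
  set M := (Real.sqrt (2 * π * σ ^ 2))⁻¹ with hM
  have hM0 : 0 < M := by positivity
  set E := (2 + K * (2 * k)) * (1 + L ^ 2) with hE
  have hE0 : 0 ≤ E := by positivity
  refine ⟨4 * M + A * E * (b - a + 2), by
    have : 0 ≤ A * E * (b - a + 2) := mul_nonneg (mul_nonneg hA hE0) (by linarith)
    linarith, ?_⟩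
  intro N hN μ hμ hφ
  have hN0 : 0 < N := by linarith
  have hφ' : ∀ t, ‖charFun μ t - charFun (gaussMeasure σ) t‖ ≤
      E * N ^ (-(1 : ℝ) / 2) * (1 + t ^ 2) := by
    intro t
    refine norm_charFun_sub_le k K L hK N hN μ (gaussMeasure σ) t ?_
    convert hφ t using 3
    · rw [charFun_apply_real]
      congr 1
      ext x
      ring_nf
    · rw [gaussMeasure_eq σ hσ, ProbabilityTheory.charFun_gaussianReal]
      simp [neg_div, Real.coe_toNNReal _ (sq_nonneg σ)]
  have hφ'' : ∀ t, ‖charFun (gaussMeasure σ) t - charFun μ t‖ ≤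
      E * N ^ (-(1 : ℝ) / 2) * (1 + t ^ 2) := fun t => by rw [norm_sub_rev]; exact hφ' t
  set ε := N ^ (-(1 : ℝ) / 12) with hε
  have hε0 : 0 < ε := by positivity
  have hε1 : ε ≤ 1 := Real.rpow_le_one_of_one_le_of_nonpos hN (by norm_num)
  have hD0 : 0 ≤ E * N ^ (-(1 : ℝ) / 2) := by positivity
  -- `N^{-1/2} ε^{-3} = N^{-1/4} ≤ N^{-1/12}`
  have hpow : N ^ (-(1 : ℝ) / 2) * ε⁻¹ ^ 3 ≤ ε := by
    rw [hε, ← Real.rpow_neg hN0.le, ← Real.rpow_natCast, ← Real.rpow_mul hN0.le,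
      ← Real.rpow_add hN0]
    exact Real.rpow_le_rpow_of_exponent_le hN (by norm_num)
  have hB : 0 ≤ b - a + 2 := by linarith
  have herr : A * (E * N ^ (-(1 : ℝ) / 2)) * ε⁻¹ ^ 3 * (b - a + 2) ≤
      A * E * (b - a + 2) * ε := by
    calc _ = A * E * (b - a + 2) * (N ^ (-(1 : ℝ) / 2) * ε⁻¹ ^ 3) := by ring
      _ ≤ _ := mul_le_mul_of_nonneg_left hpow (mul_nonneg (mul_nonneg hA hE0) hB)
  have hup := hcomp μ (gaussMeasure σ) _ hD0 hφ' ε hε0 hε1 a b _ hB (by linarith)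
  -- The lower bound compares the shrunk interval `[a + 2ε, b - 2ε]`, possibly empty.
  have hlow := hcomp (gaussMeasure σ) μ _ hD0 hφ'' ε hε0 hε1 (a + 2 * ε) (b - 2 * ε) _ hB
    (by linarith)
  have g1 := gaussMeasure_enlarge σ hσ a b (2 * ε) (by positivity)
  have g2 := gaussMeasure_enlarge σ hσ (a + 2 * ε) (b - 2 * ε) (2 * ε) (by positivity)
  rw [add_sub_cancel_right, sub_add_cancel] at hlow g2
  rw [← hM] at g1 g2
  change |μ.real (Set.Icc a b) - (gaussMeasure σ).real (Set.Icc a b)| ≤ _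
  rw [abs_le]
  constructor <;> linarith

end
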